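/- Let $G$ be a finite group, $V$ a finite-dimensional complex representation of $G$, and $H \le G$ a subgroup generated by elements each of which acts on $V$ as an involution whose fixed-point subspace in $V$ is a hyperplane. Let $\mathbb{C}[G/H]$ denote the permutation representation of $G$ on the left cosets $G/H$, and let $\Lambda V$ be the exterior algebra of $V$ with the induced $G$-action. Then $\dim_{\mathbb{C}} (\mathbb{C}[G/H] \otimes \Lambda V)^{G} = 2^{\dim_{\mathbb{C}} V^{H}}$, where the tensor product carries the diagonal $G$-action. -/

import Mathlib

open scoped TensorProduct

/-!
An invariant tensor in `K[G ⧸ H] ⊗ Λ V` is an equivariant function `G ⧸ H → Λ V`, hence is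
determined by its value at the base point, an arbitrary element of `(Λ V)ᴴ`. It remains to see that
`(Λ V)ᴴ = Λ (Vᴴ)`. A reflection has the form `s = 1 + f ⊗ u` with `f u ≠ 0` and acts on `Λ V` by
`x ↦ x + u ∧ (f ⌋ x)`; contracting with `f` shows that `s` fixes `x` if and only if `f ⌋ x = 0`.
The functionals `f` of the reflections generating `H` cut out `Vᴴ`, so an `H`-invariant `x` is
annihilated by contraction with every functional vanishing on `Vᴴ`, and such an `x` is equal to its
image under any projection of `V` onto `Vᴴ`.
-/

open CliffordAlgebra (contractLeft)
open ExteriorAlgebra (ι)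

section Contraction

variable {R V M : Type*} [CommRing R] [AddCommGroup V] [Module R V] [AddCommGroup M] [Module R M]

lemma contractLeft_exteriorAlgebra_ι_mul (f : Module.Dual R V) (v : V) (x : ExteriorAlgebra R V) :
    contractLeft f (ι R v * x) = f v • x - ι R v * contractLeft f x :=
  CliffordAlgebra.contractLeft_ι_mul _ _ _

lemma exteriorAlgebra_map_add_smulRight (A : V →ₗ[R] M) (f : Module.Dual R V) (u : M)
    (x : ExteriorAlgebra R V) :
    ExteriorAlgebra.map (A + f.smulRight u) x =
      ExteriorAlgebra.map A x + ι R u * ExteriorAlgebra.map A (contractLeft f x) := by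
  induction x using CliffordAlgebra.left_induction with
  | algebraMap r => simp [CliffordAlgebra.contractLeft_algebraMap]
  | add x y hx hy =>
    simp only [map_add, hx, hy, mul_add]
    abel
  | ι_mul x v hx =>
    have hsq (y : ExteriorAlgebra R M) : ι R u * (ι R u * y) = 0 := by
      rw [← mul_assoc, ExteriorAlgebra.ι_sq_zero, zero_mul]
    have hswap (y : ExteriorAlgebra R M) : ι R (A v) * (ι R u * y) =
        -(ι R u * (ι R (A v) * y)) := by
      simp only [← mul_assoc, ← neg_mul,
        eq_neg_of_add_eq_zero_left (ExteriorAlgebra.ι_add_mul_swap (A v) u)]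
    simp only [contractLeft_exteriorAlgebra_ι_mul, map_mul, map_sub, map_smul, map_add,
      ExteriorAlgebra.map_apply_ι, hx, LinearMap.add_apply, LinearMap.smulRight_apply, add_mul,
      mul_add, mul_sub, smul_mul_assoc, mul_smul_comm, hsq, hswap, smul_zero]
    abel

lemma exteriorAlgebra_map_add_sum_smulRight {κ : Type*} (A : V →ₗ[R] M) (t : Finset κ)
    (f : κ → Module.Dual R V) (u : κ → M) {x : ExteriorAlgebra R V}
    (hx : ∀ i ∈ t, contractLeft (f i) x = 0) :
    ExteriorAlgebra.map (A + ∑ i ∈ t, (f i).smulRight (u i)) x = ExteriorAlgebra.map A x := by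
  induction t using Finset.cons_induction with
  | empty => simp
  | cons i t hi ih =>
    rw [Finset.forall_mem_cons] at hx
    rw [Finset.sum_cons, add_comm ((f i).smulRight (u i)), ← add_assoc,
      exteriorAlgebra_map_add_smulRight, hx.1, map_zero, mul_zero, add_zero, ih hx.2]

lemma exteriorAlgebra_map_eq_map_of_contractLeft_eq_zero [Module.Free R M] [Module.Finite R M]
    (A B : V →ₗ[R] M) {x : ExteriorAlgebra R V}
    (hx : ∀ f : Module.Dual R M, contractLeft (f ∘ₗ (B - A)) x = 0) :
    ExteriorAlgebra.map A x = ExteriorAlgebra.map B x := by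
  let b := Module.Free.chooseBasis R M
  have hB : B = A + ∑ i, (b.coord i ∘ₗ (B - A)).smulRight (b i) := by
    ext v
    simpa [sub_eq_iff_eq_add'] using (b.sum_repr ((B - A) v)).symm
  rw [hB, exteriorAlgebra_map_add_sum_smulRight A _ _ _ fun i _ ↦ hx (b.coord i)]

lemma contractLeft_eq_zero_of_map_one_add_smulRight_eq_self {f : Module.Dual R V} {u : V}
    (hfu : IsUnit (f u)) {x : ExteriorAlgebra R V}
    (hx : ExteriorAlgebra.map (1 + f.smulRight u) x = x) : contractLeft f x = 0 := by
  have hmul : ι R u * contractLeft f x = 0 := by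
    have hone (y : ExteriorAlgebra R V) : ExteriorAlgebra.map (1 : V →ₗ[R] V) y = y :=
      DFunLike.congr_fun ExteriorAlgebra.map_id y
    simpa [exteriorAlgebra_map_add_smulRight, hone] using hx
  refine hfu.smul_eq_zero.mp ?_
  calc f u • contractLeft f x
      = contractLeft f (ι R u * contractLeft f x) := by
        rw [contractLeft_exteriorAlgebra_ι_mul, CliffordAlgebra.contractLeft_contractLeft,
          mul_zero, sub_zero]
    _ = 0 := by rw [hmul, map_zero]

lemma finrank_exteriorAlgebra [Nontrivial R] [Module.Free R V] [Module.Finite R V] :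
    Module.finrank R (ExteriorAlgebra R V) = 2 ^ Module.finrank R V := by
  rw [Module.finrank_eq_card_basis (Module.finBasis R V).ExteriorAlgebra, Fintype.card_finset,
    Fintype.card_fin]

end Contraction

section Field

variable {K V : Type*} [Field K] [AddCommGroup V] [Module K V]

lemma mem_range_exteriorAlgebra_map_subtype [FiniteDimensional K V] {W : Submodule K V}
    {x : ExteriorAlgebra K V} (hx : ∀ f ∈ W.dualAnnihilator, contractLeft f x = 0) :
    x ∈ (ExteriorAlgebra.map W.subtype).range := by
  obtain ⟨p, hp⟩ := LinearMap.exists_leftInverse_of_injective W.subtype W.ker_subtype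
  have hvanish (f : Module.Dual K V) :
      f ∘ₗ (LinearMap.id - W.subtype ∘ₗ p) ∈ W.dualAnnihilator := by
    rw [Submodule.mem_dualAnnihilator]
    intro w hw
    have hpw : p w = ⟨w, hw⟩ := LinearMap.congr_fun hp ⟨w, hw⟩
    simp [hpw]
  have hproj : ExteriorAlgebra.map (W.subtype ∘ₗ p) x = x := by
    rw [exteriorAlgebra_map_eq_map_of_contractLeft_eq_zero _ LinearMap.id fun f ↦ hx _ (hvanish f),
      ExteriorAlgebra.map_id, AlgHom.id_apply]
  rw [← ExteriorAlgebra.map_comp_map] at hproj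
  exact ⟨_, hproj⟩

lemma exists_eq_smulRight_of_finrank_range_eq_one {M : Type*} [AddCommGroup M] [Module K M]
    {T : V →ₗ[K] M} (hT : Module.finrank K T.range = 1) :
    ∃ (f : Module.Dual K V) (u : M), T = f.smulRight u := by
  let b := Module.basisUnique Unit hT
  refine ⟨b.coord () ∘ₗ T.rangeRestrict, b (), LinearMap.ext fun v ↦ ?_⟩
  simpa using congrArg Subtype.val (b.sum_repr (T.rangeRestrict v)).symm

/-- A reflection in the sense of (complex) reflection groups: an endomorphism whose fixed space is
a hyperplane and which is not a transvection: the image of `s - 1` meets the fixed space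
trivially. -/
structure IsSemisimpleReflection (s : Module.End K V) : Prop where
  finrank_ker_add_one : Module.finrank K (LinearMap.ker (s - 1)) + 1 = Module.finrank K V
  disjoint_ker_range : Disjoint (LinearMap.ker (s - 1)) (LinearMap.range (s - 1))

namespace IsSemisimpleReflection

lemma of_pow_eq_one {s : Module.End K V} {n : ℕ} (hn : (n : K) ≠ 0) (hs : s ^ n = 1)
    (hker : Module.finrank K (LinearMap.ker (s - 1)) + 1 = Module.finrank K V) :
    IsSemisimpleReflection s where
  finrank_ker_add_one := hker
  disjoint_ker_range := by
    rw [Submodule.disjoint_def]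
    rintro w hfix ⟨v, rfl⟩
    set w := (s - 1) v
    have hfix' : s w = w := by simpa [sub_eq_zero] using hfix
    have hpow (i : ℕ) : (s ^ i) w = w := by
      rw [Module.End.pow_apply, Function.iterate_fixed hfix']
    have hsum : ∑ i ∈ Finset.range n, (s ^ i) w = 0 := by
      have hgeom : (∑ i ∈ Finset.range n, s ^ i) * (s - 1) = 0 := by
        rw [geom_sum_mul, hs, sub_self]
      simpa only [Module.End.mul_apply, LinearMap.sum_apply, LinearMap.zero_apply]
        using LinearMap.congr_fun hgeom v
    have hnw : (n : K) • w = 0 := by simpa [hpow, Nat.cast_smul_eq_nsmul] using hsum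
    exact (smul_eq_zero.mp hnw).resolve_left hn

lemma exists_eq_one_add_smulRight [FiniteDimensional K V] {s : Module.End K V}
    (hs : IsSemisimpleReflection s) :
    ∃ (f : Module.Dual K V) (u : V), f u ≠ 0 ∧ s = 1 + f.smulRight u := by
  have hrank : Module.finrank K (LinearMap.range (s - 1)) = 1 := by
    have hsum := LinearMap.finrank_range_add_finrank_ker (s - 1)
    have hker := hs.finrank_ker_add_one
    omega
  obtain ⟨f, u, hfu⟩ := exists_eq_smulRight_of_finrank_range_eq_one hrank
  refine ⟨f, u, fun hu ↦ ?_, by rw [← hfu, add_sub_cancel]⟩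
  have hle : LinearMap.range (s - 1) ≤ LinearMap.ker (s - 1) := by
    rintro _ ⟨v, rfl⟩
    simp [hfu, hu]
  rw [(disjoint_of_le_iff_left_eq_bot hle).mp hs.disjoint_ker_range.symm] at hrank
  exact absurd hrank (by simp)

end IsSemisimpleReflection

end Field

section Invariants

variable {R G V : Type*} [CommRing R] [Group G] [AddCommGroup V] [Module R V]

lemma mem_invariants_iff_of_closure_eq_top (ρ : Representation R G V) {S : Set G}
    (hS : Subgroup.closure S = ⊤) {v : V} : v ∈ ρ.invariants ↔ ∀ s ∈ S, ρ s v = v := by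
  refine ⟨fun hv s _ ↦ hv s, fun hv g ↦ ?_⟩
  induction (hS ▸ Subgroup.mem_top g : g ∈ Subgroup.closure S) using
    Subgroup.closure_induction with
  | mem s hs => exact hv s hs
  | one => rw [map_one, Module.End.one_apply]
  | mul a b _ _ ha hb => rw [map_mul, Module.End.mul_apply, hb, ha]
  | inv a _ ha => exact (congrArg (ρ a⁻¹) ha).symm.trans (ρ.inv_self_apply a v)

lemma range_exteriorAlgebra_map_invariants_le (ρ : Representation R G V)
    (τ : Representation R G (ExteriorAlgebra R V))
    (hτ : ∀ g, τ g = (ExteriorAlgebra.map (ρ g)).toLinearMap) :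
    (ExteriorAlgebra.map ρ.invariants.subtype).toLinearMap.range ≤ τ.invariants := by
  rintro _ ⟨y, rfl⟩ g
  have hg : ρ g ∘ₗ ρ.invariants.subtype = ρ.invariants.subtype := LinearMap.ext fun w ↦ w.2 g
  rw [hτ, AlgHom.toLinearMap_apply, AlgHom.toLinearMap_apply, ← AlgHom.comp_apply,
    ExteriorAlgebra.map_comp_map, hg]

end Invariants

section Reflections

variable {K G V : Type*} [Field K] [Group G] [AddCommGroup V] [Module K V] [FiniteDimensional K V]
  (ρ : Representation K G V) {S : Set G} (hS : Subgroup.closure S = ⊤)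
  (hrefl : ∀ s ∈ S, IsSemisimpleReflection (ρ s))
  (τ : Representation K G (ExteriorAlgebra K V))
  (hτ : ∀ g, τ g = (ExteriorAlgebra.map (ρ g)).toLinearMap)

include hS hrefl hτ

lemma contractLeft_eq_zero_of_mem_invariants {x : ExteriorAlgebra K V} (hx : x ∈ τ.invariants)
    {f : Module.Dual K V} (hf : f ∈ ρ.invariants.dualAnnihilator) : contractLeft f x = 0 := by
  let F : Submodule K (Module.Dual K V) := LinearMap.ker (contractLeft.flip x)
  have hF : F.dualCoannihilator ≤ ρ.invariants := by
    intro v hv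
    rw [mem_invariants_iff_of_closure_eq_top ρ hS]
    intro s hs
    obtain ⟨f, u, hfu, hsf⟩ := (hrefl s hs).exists_eq_one_add_smulRight
    have hxs : ExteriorAlgebra.map (1 + f.smulRight u) x = x := by
      simpa [hτ, hsf] using hx s
    have hfv : f v = 0 := (Submodule.mem_dualCoannihilator v).mp hv f
      (contractLeft_eq_zero_of_map_one_add_smulRight_eq_self hfu.isUnit hxs)
    simp [hsf, hfv]
  have hfF : f ∈ F.dualCoannihilator.dualAnnihilator := Submodule.dualAnnihilator_anti hF hf
  rwa [Subspace.dualCoannihilator_dualAnnihilator_eq] at hfF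

lemma invariants_exteriorAlgebra_eq_range :
    τ.invariants = (ExteriorAlgebra.map ρ.invariants.subtype).toLinearMap.range :=
  le_antisymm
    (fun _ hx ↦ mem_range_exteriorAlgebra_map_subtype fun _ hf ↦
      contractLeft_eq_zero_of_mem_invariants ρ hS hrefl τ hτ hx hf)
    (range_exteriorAlgebra_map_invariants_le ρ τ hτ)

lemma finrank_invariants_exteriorAlgebra :
    Module.finrank K τ.invariants = 2 ^ Module.finrank K ρ.invariants := by
  rw [invariants_exteriorAlgebra_eq_range ρ hS hrefl τ hτ, ← finrank_exteriorAlgebra]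
  exact LinearMap.finrank_range_of_inj
    (ExteriorAlgebra.map_injective_field ρ.invariants.ker_subtype)

end Reflections

section Permutation

variable {R M X : Type*} [CommRing R] [AddCommGroup M] [Module R M]

variable (R M X) in
open Classical in
/-- Reads a tensor in the permutation module on `X` with coefficients in `M` as a finitely supported
function `X → M`. -/
noncomputable def permutationTensorEquiv : MonoidAlgebra R X ⊗[R] M ≃ₗ[R] (X →₀ M) :=
  (TensorProduct.congr (MonoidAlgebra.coeffLinearEquiv R) (LinearEquiv.refl R M)).trans
    (TensorProduct.finsuppScalarLeft R M X)

variable {G : Type*} [Group G] [MulAction G X] (τ : Representation R G M)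

lemma permutationTensorEquiv_tprod_apply (g : G) (t : MonoidAlgebra R X ⊗[R] M) (x : X) :
    permutationTensorEquiv R M X ((Representation.ofMulAction R G X).tprod τ g t) x =
      τ g (permutationTensorEquiv R M X t (g⁻¹ • x)) := by
  induction t using TensorProduct.induction_on with
  | zero => simp
  | add a b ha hb => simp only [map_add, Finsupp.add_apply, ha, hb]
  | tmul a m =>
    simp [permutationTensorEquiv, TensorProduct.finsuppScalarLeft_apply_tmul_apply,
      Representation.coeff_ofMulAction]

lemma mem_invariants_permutation_tprod_iff {t : MonoidAlgebra R X ⊗[R] M} :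
    t ∈ ((Representation.ofMulAction R G X).tprod τ).invariants ↔
      ∀ (g : G) (x : X),
        permutationTensorEquiv R M X t (g • x) = τ g (permutationTensorEquiv R M X t x) := by
  constructor
  · intro ht g x
    rw [← ht g, permutationTensorEquiv_tprod_apply, ht g, inv_smul_smul]
  · intro ht g
    apply (permutationTensorEquiv R M X).injective
    ext x
    rw [permutationTensorEquiv_tprod_apply, ← ht, smul_inv_smul]

/-- Evaluation at `x` of invariant tensors, read as equivariant functions `X → M`; its values are
fixed by the stabilizer of `x`. -/
noncomputable def evalInvariants (x : X) :
    ((Representation.ofMulAction R G X).tprod τ).invariants →ₗ[R]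
      Representation.invariants (τ.comp (MulAction.stabilizer G x).subtype) :=
  LinearMap.codRestrict _
    (Finsupp.lapply x ∘ₗ (permutationTensorEquiv R M X).toLinearMap ∘ₗ Submodule.subtype _)
    fun t h ↦ by
      have ht := (mem_invariants_permutation_tprod_iff τ).mp t.2 h x
      rw [h.2] at ht
      exact ht.symm

lemma coe_evalInvariants (x : X)
    (t : ((Representation.ofMulAction R G X).tprod τ).invariants) :
    (evalInvariants τ x t : M) = permutationTensorEquiv R M X t x :=
  rfl

variable [MulAction.IsPretransitive G X]

lemma evalInvariants_injective (x : X) : Function.Injective (evalInvariants τ x) := by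
  intro t t' h
  rw [Subtype.ext_iff, coe_evalInvariants, coe_evalInvariants] at h
  refine Subtype.ext ((permutationTensorEquiv R M X).injective (Finsupp.ext fun y ↦ ?_))
  obtain ⟨g, rfl⟩ := MulAction.exists_smul_eq G x y
  rw [(mem_invariants_permutation_tprod_iff τ).mp t.2,
    (mem_invariants_permutation_tprod_iff τ).mp t'.2, h]

variable {τ} in
lemma exists_equivariant_of_mem_invariants_stabilizer {x : X} {m : M}
    (hm : m ∈ Representation.invariants (τ.comp (MulAction.stabilizer G x).subtype)) :
    ∃ φ : X → M, φ x = m ∧ ∀ (g : G) (y : X), φ (g • y) = τ g (φ y) := by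
  choose c hc using MulAction.exists_smul_eq G x
  have hcoset {a b : G} (hab : a • x = b • x) : τ a m = τ b m := by
    have hstab : b⁻¹ * a ∈ MulAction.stabilizer G x := by
      rw [MulAction.mem_stabilizer_iff, mul_smul, hab, inv_smul_smul]
    calc τ a m = τ (b * (b⁻¹ * a)) m := by rw [mul_inv_cancel_left]
      _ = τ b (τ (b⁻¹ * a) m) := by rw [map_mul, Module.End.mul_apply]
      _ = τ b m := congrArg (τ b) (hm ⟨_, hstab⟩)
  refine ⟨fun y ↦ τ (c y) m, ?_, fun g y ↦ ?_⟩
  · beta_reduce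
    rw [hcoset ((hc x).trans (one_smul G x).symm), map_one, Module.End.one_apply]
  · rw [← Module.End.mul_apply, ← map_mul]
    exact hcoset (by rw [mul_smul, hc, hc])

lemma evalInvariants_surjective [Finite X] (x : X) : Function.Surjective (evalInvariants τ x) := by
  intro m
  obtain ⟨φ, hφx, hφ⟩ := exists_equivariant_of_mem_invariants_stabilizer m.2
  let t := (permutationTensorEquiv R M X).symm (Finsupp.equivFunOnFinite.symm φ)
  have ht (y : X) : permutationTensorEquiv R M X t y = φ y := by
    rw [LinearEquiv.apply_symm_apply, Finsupp.equivFunOnFinite_symm_apply_apply]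
  have hinv : t ∈ ((Representation.ofMulAction R G X).tprod τ).invariants := by
    rw [mem_invariants_permutation_tprod_iff]
    intro g y
    rw [ht, ht, hφ]
  exact ⟨⟨t, hinv⟩, Subtype.ext ((ht x).trans hφx)⟩

lemma finrank_invariants_permutation_tprod [Finite X] (x : X) :
    Module.finrank R ((Representation.ofMulAction R G X).tprod τ).invariants =
      Module.finrank R
        (Representation.invariants (τ.comp (MulAction.stabilizer G x).subtype)) :=
  (LinearEquiv.ofBijective (evalInvariants τ x)
    ⟨evalInvariants_injective τ x, evalInvariants_surjective τ x⟩).finrank_eq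

end Permutation

theorem finrank_invariants_permutation_tensor_exterior_general
    {K G V : Type*} [Field K] [Group G] (H : Subgroup G) [H.FiniteIndex]
    [AddCommGroup V] [Module K V] [FiniteDimensional K V] (ρ : Representation K G V)
    (S : Set G) (hgen : Subgroup.closure S = H)
    (hrefl : ∀ s ∈ S, IsSemisimpleReflection (ρ s))
    (τ : Representation K G (ExteriorAlgebra K V))
    (hτ : ∀ g : G, τ g = (ExteriorAlgebra.map (ρ g)).toLinearMap) :
    Module.finrank K
        ((Representation.ofMulAction K G (G ⧸ H)).tprod τ).invariants =
      2 ^ Module.finrank K (Representation.invariants (ρ.comp H.subtype)) := by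
  rw [finrank_invariants_permutation_tprod τ ((1 : G) : G ⧸ H), MulAction.stabilizer_quotient]
  subst hgen
  exact finrank_invariants_exteriorAlgebra (ρ.comp (Subgroup.closure S).subtype)
    Subgroup.closure_closure_coe_preimage (fun s hs ↦ hrefl s hs) _ (fun g ↦ hτ g)

/-- Let `G` be a finite group, `V` a finite-dimensional complex
representation of `G`, and `H ≤ G` a subgroup generated by elements acting on `V`
as involutions fixing a hyperplane pointwise. Then the `G`-invariants of
`ℂ[G/H] ⊗ Λ V` (diagonal action) have dimension `2 ^ dim V^H`. -/
theorem finrank_invariants_permutation_tensor_exterior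
    {G : Type*} [Group G] [Finite G] (H : Subgroup G)
    {V : Type*} [AddCommGroup V] [Module ℂ V] [FiniteDimensional ℂ V]
    (ρ : Representation ℂ G V)
    (S : Set G) (hgen : Subgroup.closure S = H)
    (hrefl : ∀ s ∈ S, ρ s * ρ s = 1 ∧
      Module.finrank ℂ (LinearMap.ker (ρ s - 1)) + 1 = Module.finrank ℂ V)
    (τ : Representation ℂ G (ExteriorAlgebra ℂ V))
    (hτ : ∀ g : G, τ g = (ExteriorAlgebra.map (ρ g)).toLinearMap) :
    Module.finrank ℂ
        ((Representation.ofMulAction ℂ G (G ⧸ H)).tprod τ).invariants =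
      2 ^ Module.finrank ℂ (Representation.invariants (ρ.comp H.subtype)) := by
  exact finrank_invariants_permutation_tensor_exterior_general H ρ S hgen
    (fun s hs ↦ .of_pow_eq_one (n := 2) two_ne_zero ((pow_two _).trans (hrefl s hs).1)
      (hrefl s hs).2) τ hτ
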